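/- Each of the operators T_k (1 ≤ k ≤ n−1), X_i, Y'_i, (Y'_i)^{−1}, D'_i (1 ≤ i ≤ n) maps the polynomial subring P into itself, and P is irreducible under their joint action: the only F-linear subspaces V ⊆ P satisfying T_k(V) ⊆ V, X_i(V) ⊆ V, Y'_i(V) ⊆ V, (Y'_i)^{−1}(V) ⊆ V and D'_i(V) ⊆ V for all admissible i and k are V = {0} and V = P. -/

import Mathlib

noncomputable section

/-- The Laurent polynomial ring `R[X₁^{±1}, …, Xₙ^{±1}]` in `n` variables over `R`,
realised as the monoid algebra of the additive monoid `Fin n →₀ ℤ` of exponent vectors. -/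
abbrev Laur (R : Type*) [CommRing R] (n : ℕ) : Type _ :=
  AddMonoidAlgebra R (Fin n →₀ ℤ)

variable {R : Type*} [CommRing R] {n : ℕ}

/-- The monomial `c · X^a`. -/
def mono (a : Fin n →₀ ℤ) (c : R) : Laur R n := AddMonoidAlgebra.single a c

/-- The generator `X_i`. -/
def Xel (i : Fin n) : Laur R n := mono (Finsupp.single i 1) 1

/-- The element `X_i⁻¹`. -/
def XinvEl (i : Fin n) : Laur R n := mono (Finsupp.single i (-1)) 1

/-- Multiplication by a Laurent polynomial, as a linear endomorphism. -/
def mulOp (x : Laur R n) : Module.End R (Laur R n) := LinearMap.mulLeft R x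

/-- The operator of multiplication by `X_i`, with `ℕ`-indexing (`0`-based; junk value `1`
out of range). -/
def XOp (i : ℕ) : Module.End R (Laur R n) :=
  if h : i < n then mulOp (Xel ⟨i, h⟩) else 1

/-- The operator of multiplication by `X_i⁻¹`, with `ℕ`-indexing. -/
def XinvOp (i : ℕ) : Module.End R (Laur R n) :=
  if h : i < n then mulOp (XinvEl ⟨i, h⟩) else 1

/-- Ascending product `f s * f (s+1) * ⋯ * f (s+len-1)` (equal to `1` when `len = 0`). -/
def aF {M : Type*} [Monoid M] (f : ℕ → M) (s len : ℕ) : M :=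
  ((List.range' s len).map f).prod

/-- Descending product `f (s+len-1) * ⋯ * f (s+1) * f s` (equal to `1` when `len = 0`). -/
def dF {M : Type*} [Monoid M] (f : ℕ → M) (s len : ℕ) : M :=
  (((List.range' s len).map f).reverse).prod

/-- Integer power `u^z`, where `v` is a designated (two-sided) inverse of `u`. -/
def zpowOp {M : Type*} [Monoid M] (u v : M) (z : ℤ) : M :=
  if 0 ≤ z then u ^ z.toNat else v ^ (-z).toNat

/-- The polynomial subring `F[X_1, …, X_n] ⊆ L`, as an `F`-subspace: the span of the
monomials with nonnegative exponents. -/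
def polySub (F : Type*) [Field F] (n : ℕ) : Submodule F (Laur F n) :=
  Submodule.span F {p | ∃ a : Fin n →₀ ℤ, (∀ i, 0 ≤ a i) ∧ p = mono a 1}

section Helpers

/-- Elements supported on a set of exponents. -/
abbrev spS {F : Type*} [Field F] {n : ℕ} (S : Set (Fin n →₀ ℤ)) : Submodule F (Laur F n) :=
  AddMonoidAlgebra.supported F F S

/-- Nonnegative exponents. -/
def NnS (n : ℕ) : Set (Fin n →₀ ℤ) := {a | ∀ i, 0 ≤ a i}

/-- Nonnegative exponents of total degree less than `d`. -/
def AdS (n : ℕ) (d : ℕ) : Set (Fin n →₀ ℤ) := {a | (∀ i, 0 ≤ a i) ∧ ∑ i, a i < d}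

/-- Nonnegative exponents that are positive at `j`. -/
def ZkS {n : ℕ} (j : Fin n) : Set (Fin n →₀ ℤ) := {a | (∀ i, 0 ≤ a i) ∧ 1 ≤ a j}

variable {F : Type*} [Field F] {n : ℕ}

lemma spS_eq_span (S : Set (Fin n →₀ ℤ)) :
    (spS S : Submodule F (Laur F n)) = Submodule.span F ((fun a => mono a (1 : F)) '' S) :=
  AddMonoidAlgebra.supported_eq_span_single _ _

lemma mono_mem {S : Set (Fin n →₀ ℤ)} {a : Fin n →₀ ℤ} (h : a ∈ S) (r : F) :
    mono a r ∈ (spS S : Submodule F (Laur F n)) := by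
  rw [AddMonoidAlgebra.mem_supported']
  intro m hm
  have : a ≠ m := fun e => hm (e ▸ h)
  simp [mono, this]

lemma spS_map {S : Set (Fin n →₀ ℤ)} {N : Submodule F (Laur F n)}
    (f : Module.End F (Laur F n)) (h : ∀ a ∈ S, f (mono a 1) ∈ N) :
    ∀ p ∈ (spS S : Submodule F (Laur F n)), f p ∈ N := by
  intro p hp
  rw [spS_eq_span] at hp
  have : Submodule.span F ((fun a => mono a (1 : F)) '' S) ≤ N.comap f := by
    rw [Submodule.span_le]
    rintro _ ⟨a, ha, rfl⟩
    exact h a ha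
  exact this hp

lemma end_ext {f g : Module.End F (Laur F n)} (h : ∀ a, f (mono a 1) = g (mono a 1)) :
    f = g := by
  have h1 : ∀ p ∈ (spS Set.univ : Submodule F (Laur F n)), (f - g) p ∈ (⊥ : Submodule F (Laur F n)) :=
    spS_map _ (fun a _ => by simp [h a])
  refine LinearMap.ext fun p => ?_
  have := h1 p (by simp [AddMonoidAlgebra.mem_supported'])
  simpa [sub_eq_zero] using this

lemma spS_mono {S S' : Set (Fin n →₀ ℤ)} (h : S ⊆ S') :
    (spS S : Submodule F (Laur F n)) ≤ spS S' := by
  intro p hp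
  rw [AddMonoidAlgebra.mem_supported] at *
  exact hp.trans h

lemma polySub_eq : polySub F n = spS (NnS n) := by
  rw [spS_eq_span, polySub]
  congr 1
  ext p
  simp only [Set.mem_image, Set.mem_ofPred_eq, NnS]
  exact ⟨fun ⟨a, h, e⟩ => ⟨a, h, e.symm⟩, fun ⟨a, h, e⟩ => ⟨a, h, e.symm⟩⟩

lemma mono_mul_mono (a b : Fin n →₀ ℤ) (r s : F) : mono a r * mono b s = mono (a + b) (r * s) := by
  simp [mono, AddMonoidAlgebra.single_mul_single]

lemma coeff_mono_mul (a b : Fin n →₀ ℤ) (p : Laur F n) :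
    (mono a 1 * p).coeff b = p.coeff (b - a) := by
  rw [mono, AddMonoidAlgebra.coeff_single_mul_apply, one_mul, neg_add_eq_sub]

lemma mono_zero_one : mono (0 : Fin n →₀ ℤ) (1 : F) = 1 := rfl

lemma Xel_mul_mono (j : Fin n) (a : Fin n →₀ ℤ) (r : F) :
    Xel j * mono a r = mono (Finsupp.single j 1 + a) r := by
  simp [Xel, mono_mul_mono]

lemma Xinv_mul_Xel (j : Fin n) : (XinvEl j * Xel j : Laur F n) = 1 := by
  simp only [XinvEl, Xel, mono_mul_mono, ← mono_zero_one]
  congr 1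
  · rw [← Finsupp.single_add]; simp
  · simp

lemma mem_AdS_of_NnS {p : Laur F n} (hp : p ∈ (spS (NnS n) : Submodule F (Laur F n))) :
    ∃ d, p ∈ (spS (AdS n d) : Submodule F (Laur F n)) := by
  classical
  rw [AddMonoidAlgebra.mem_supported] at hp
  refine ⟨(∑ a ∈ p.coeff.support, (∑ i, a i).toNat) + 1, ?_⟩
  rw [AddMonoidAlgebra.mem_supported]
  intro a ha
  refine ⟨hp ha, ?_⟩
  have h1 : (∑ i, a i).toNat ≤ ∑ a ∈ p.coeff.support, (∑ i, a i).toNat :=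
    Finset.single_le_sum (f := fun a : Fin n →₀ ℤ => (∑ i, a i).toNat) (fun _ _ => Nat.zero_le _) ha
  rw [Nat.cast_succ]
  have := Int.self_le_toNat (∑ i, a i)
  omega

lemma AdS_le_NnS (d : ℕ) : AdS n d ⊆ NnS n := fun _ h => h.1

lemma AdS_zero : (spS (AdS n 0) : Submodule F (Laur F n)) = ⊥ := by
  have : AdS n 0 = ∅ := by
    ext a
    simp only [AdS, Set.mem_ofPred_eq, Set.mem_empty_iff_false, iff_false, not_and, not_lt]
    intro h
    simpa using Finset.sum_nonneg (fun i _ => h i)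
  rw [this, spS_eq_span]
  simp

lemma sum_single_add (j : Fin n) (a : Fin n →₀ ℤ) (z : ℤ) :
    ∑ i, (Finsupp.single j z + a) i = z + ∑ i, a i := by
  simp [Finset.sum_add_distrib, Finsupp.single_apply]

lemma X_mem_AdS {d : ℕ} (j : Fin n) {p : Laur F n}
    (hp : p ∈ (spS (AdS n d) : Submodule F (Laur F n))) :
    Xel j * p ∈ (spS (AdS n (d + 1)) : Submodule F (Laur F n)) := by
  refine spS_map (mulOp (Xel j)) ?_ p hp
  intro a ha
  change Xel j * _ ∈ _
  rw [Xel_mul_mono]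
  refine mono_mem (S := AdS n (d + 1)) ⟨fun i => ?_, ?_⟩ _
  · have := ha.1 i
    have h2 : (0 : ℤ) ≤ Finsupp.single j (1 : ℤ) i := by
      rw [Finsupp.single_apply]; split_ifs <;> simp
    rw [Finsupp.add_apply]; omega
  · rw [sum_single_add]; have := ha.2; push_cast; omega

lemma X_mem_Zk (j : Fin n) {p : Laur F n}
    (hp : p ∈ (spS (NnS n) : Submodule F (Laur F n))) :
    Xel j * p ∈ (spS (ZkS j) : Submodule F (Laur F n)) := by
  refine spS_map (mulOp (Xel j)) ?_ p hp
  intro a ha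
  change Xel j * _ ∈ _
  rw [Xel_mul_mono]
  refine mono_mem (S := ZkS j) ⟨fun i => ?_, ?_⟩ _
  · have := ha i
    have h2 : (0 : ℤ) ≤ Finsupp.single j (1 : ℤ) i := by
      rw [Finsupp.single_apply]; split_ifs <;> simp
    rw [Finsupp.add_apply]; omega
  · have := ha j
    simp; omega

lemma ZkS_le_NnS (j : Fin n) : ZkS j ⊆ NnS n := fun _ h => h.1

lemma X_mem_NnS (j : Fin n) {p : Laur F n}
    (hp : p ∈ (spS (NnS n) : Submodule F (Laur F n))) :
    Xel j * p ∈ (spS (NnS n) : Submodule F (Laur F n)) :=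
  spS_mono (ZkS_le_NnS j) (X_mem_Zk j hp)

lemma Xinv_mem_NnS (j : Fin n) {p : Laur F n}
    (hp : p ∈ (spS (ZkS j) : Submodule F (Laur F n))) :
    XinvEl j * p ∈ (spS (NnS n) : Submodule F (Laur F n)) := by
  refine spS_map (mulOp (XinvEl j)) ?_ p hp
  intro a ha
  change XinvEl j * _ ∈ _
  rw [XinvEl, mono_mul_mono]
  refine mono_mem (fun i => ?_) _
  have := ha.1 i
  have h2 := ha.2
  rw [Finsupp.add_apply, Finsupp.single_apply]
  split_ifs with h
  · subst h; omega
  · omega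

lemma exists_of_mem_Zk (j : Fin n) {p : Laur F n}
    (hp : p ∈ (spS (ZkS j) : Submodule F (Laur F n))) :
    ∃ r ∈ (spS (NnS n) : Submodule F (Laur F n)), p = Xel j * r := by
  refine ⟨_, Xinv_mem_NnS j hp, ?_⟩
  rw [← mul_assoc, mul_comm (Xel j), Xinv_mul_Xel, one_mul]

lemma X_mem_Zk' (i j : Fin n) {p : Laur F n}
    (hp : p ∈ (spS (ZkS j) : Submodule F (Laur F n))) :
    Xel i * p ∈ (spS (ZkS j) : Submodule F (Laur F n)) := by
  obtain ⟨r, hr, rfl⟩ := exists_of_mem_Zk j hp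
  rw [mul_left_comm]
  exact X_mem_Zk _ (X_mem_NnS _ hr)

/-- Dividing by a variable lowers the degree. -/
lemma Xinv_mem_AdS {d : ℕ} (j : Fin n) {p : Laur F n}
    (hp : p ∈ (spS (AdS n (d + 1)) : Submodule F (Laur F n)))
    (h : XinvEl j * p ∈ (spS (NnS n) : Submodule F (Laur F n))) :
    XinvEl j * p ∈ (spS (AdS n d) : Submodule F (Laur F n)) := by
  rw [AddMonoidAlgebra.mem_supported] at *
  intro a ha
  refine ⟨h ha, ?_⟩
  have h2 : a - Finsupp.single j (-1) ∈ p.coeff.support := by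
    simp only [Finset.mem_coe, Finsupp.mem_support_iff] at ha ⊢
    rwa [XinvEl, coeff_mono_mul] at ha
  have h3 := (hp h2).2
  have : a - Finsupp.single j (-1) = Finsupp.single j 1 + a := by
    rw [Finsupp.single_neg]; abel
  rw [this, sum_single_add] at h3
  push_cast at h3
  omega

lemma mono_ind {C : (Fin n →₀ ℤ) → Prop} (h0 : C 0)
    (hX : ∀ j a, a ∈ NnS n → C a → C (Finsupp.single j 1 + a)) : ∀ a ∈ NnS n, C a := by
  have key : ∀ (d : ℕ) (a : Fin n →₀ ℤ), a ∈ NnS n → ∑ i, a i = d → C a := by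
    intro d
    induction d with
    | zero =>
      intro a ha hs
      have : a = 0 := by
        ext i
        have := (Finset.sum_eq_zero_iff_of_nonneg (fun i _ => ha i)).1 (by simpa using hs) i
        simpa using this
      rwa [this]
    | succ d ih =>
      intro a ha hs
      obtain ⟨j, hj⟩ : ∃ j, a j ≠ 0 := by
        by_contra! hc
        simp [hc] at hs
        omega
      have e : a = Finsupp.single j 1 + (Finsupp.single j (-1) + a) := by
        rw [← add_assoc, ← Finsupp.single_add]; simp
      have hb : Finsupp.single j (-1) + a ∈ NnS n := by
        intro i
        have := ha i
        rw [Finsupp.add_apply, Finsupp.single_apply]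
        split_ifs with h
        · subst h; omega
        · omega
      rw [e]
      apply hX j _ hb
      apply ih _ hb
      rw [sum_single_add, hs]; push_cast; omega
  intro a ha
  refine key (∑ i, a i).toNat a ha ?_
  rw [Int.toNat_of_nonneg (Finset.sum_nonneg fun i _ => ha i)]

lemma W_X {w : Equiv.Perm (Fin n)} {s : Module.End F (Laur F n)}
    (hs : ∀ v r, s (mono v r) = mono (Finsupp.equivMapDomain w v) r) (j : Fin n) (p : Laur F n) :
    s (Xel j * p) = Xel (w j) * s p := by
  have : s * mulOp (Xel j) = mulOp (Xel (w j)) * s := by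
    apply end_ext
    intro a
    change s (Xel j * _) = Xel (w j) * s _
    rw [Xel_mul_mono, hs, hs, Xel_mul_mono]
    congr 1
    ext i
    simp [Finsupp.equivMapDomain_apply, Finsupp.single_apply, Equiv.eq_symm_apply]
  exact congrArg (fun f => f p) this

lemma mem_equivMapDomain_NnS (w : Equiv.Perm (Fin n)) {a : Fin n →₀ ℤ} (h : a ∈ NnS n) :
    Finsupp.equivMapDomain w a ∈ NnS n := fun i => h _

lemma sum_equivMapDomain (w : Equiv.Perm (Fin n)) (a : Fin n →₀ ℤ) :
    ∑ i, Finsupp.equivMapDomain w a i = ∑ i, a i := by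
  simp only [Finsupp.equivMapDomain_apply]
  exact Equiv.sum_comp w.symm (fun i => a i)

lemma mem_equivMapDomain_AdS (w : Equiv.Perm (Fin n)) {d : ℕ} {a : Fin n →₀ ℤ} (h : a ∈ AdS n d) :
    Finsupp.equivMapDomain w a ∈ AdS n d :=
  ⟨fun i => h.1 _, by rw [sum_equivMapDomain]; exact h.2⟩

lemma X_sub_ne {x y : Fin n} (hxy : x ≠ y) : (Xel y - Xel x : Laur F n) ≠ 0 := by
  rw [sub_ne_zero]
  intro h
  have := (AddMonoidAlgebra.single_left_inj (one_ne_zero (α := F))).1 h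
  exact hxy (Finsupp.single_left_injective (one_ne_zero) this).symm

section TT
variable {t : F} {x y : Fin n} {s T : Module.End F (Laur F n)}

lemma T_X (hxy : x ≠ y)
    (hs : ∀ v r, s (mono v r) = mono (Finsupp.equivMapDomain (Equiv.swap x y) v) r)
    (hT : ∀ p, (Xel y - Xel x) * T p
        = (t⁻¹ • Xel y - t • Xel x) * s p + (t - t⁻¹) • (Xel y * p)) (j : Fin n) (p : Laur F n) :
    T (Xel j * p) = Xel (Equiv.swap x y j) * T p +
      (if j = x then -(t - t⁻¹) else if j = y then t - t⁻¹ else 0) • (Xel y * p) := by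
  apply mul_left_cancel₀ (X_sub_ne (F := F) hxy)
  have h1 := hT (Xel j * p)
  have h2 := hT p
  rw [W_X hs] at h1
  simp only [Algebra.smul_def] at h1 h2 ⊢
  by_cases hx : j = x
  · subst hx
    simp only [Equiv.swap_apply_left, if_true, map_neg] at h1 ⊢
    linear_combination h1 - Xel y * h2
  · by_cases hy : j = y
    · subst hy
      simp only [Equiv.swap_apply_right, if_true, if_neg hx] at h1 ⊢
      linear_combination h1 - Xel x * h2
    · rw [Equiv.swap_apply_of_ne_of_ne hx hy] at h1 ⊢
      simp only [if_neg hx, if_neg hy, map_zero]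
      linear_combination h1 - Xel j * h2

lemma T_one (hxy : x ≠ y)
    (hs : ∀ v r, s (mono v r) = mono (Finsupp.equivMapDomain (Equiv.swap x y) v) r)
    (hT : ∀ p, (Xel y - Xel x) * T p
        = (t⁻¹ • Xel y - t • Xel x) * s p + (t - t⁻¹) • (Xel y * p)) :
    T 1 = t • 1 := by
  apply mul_left_cancel₀ (X_sub_ne (F := F) hxy)
  rw [hT 1]
  have : s 1 = 1 := by
    rw [← mono_zero_one, hs]; congr 1
  rw [this]
  simp only [Algebra.smul_def, map_sub]
  ring

lemma T_mem (hxy : x ≠ y)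
    (hs : ∀ v r, s (mono v r) = mono (Finsupp.equivMapDomain (Equiv.swap x y) v) r)
    (hT : ∀ p, (Xel y - Xel x) * T p
        = (t⁻¹ • Xel y - t • Xel x) * s p + (t - t⁻¹) • (Xel y * p)) (d : ℕ) :
    ∀ p ∈ (spS (AdS n d) : Submodule F (Laur F n)), T p ∈ (spS (AdS n d) : Submodule F (Laur F n)) := by
  apply spS_map
  intro a ha
  have key : ∀ a ∈ NnS n, ∀ d : ℕ, ∑ i, a i < d →
      T (mono a 1) ∈ (spS (AdS n d) : Submodule F (Laur F n)) := by
    apply mono_ind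
    · intro d hd
      rw [mono_zero_one, T_one hxy hs hT, ← mono_zero_one]
      exact Submodule.smul_mem _ _ (mono_mem (S := AdS n d) ⟨fun i => le_rfl, hd⟩ _)
    · intro j a ha ih d hd
      rw [sum_single_add] at hd
      have h0 : 0 ≤ ∑ i, a i := Finset.sum_nonneg (fun i _ => ha i)
      obtain ⟨e, rfl⟩ : ∃ e, d = e + 1 := ⟨d - 1, by omega⟩
      have he : ∑ i, a i < (e : ℤ) := by push_cast at hd; omega
      rw [← Xel_mul_mono, T_X hxy hs hT]
      exact Submodule.add_mem _ (X_mem_AdS _ (ih e he))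
        (Submodule.smul_mem _ _ (X_mem_AdS _ (mono_mem (S := AdS n e) ⟨ha, he⟩ _)))
  exact key a ha.1 d ha.2

lemma Ti_congr (ht : t ≠ 0) (hxy : x ≠ y)
    (hs : ∀ v r, s (mono v r) = mono (Finsupp.equivMapDomain (Equiv.swap x y) v) r)
    (hT : ∀ p, (Xel y - Xel x) * T p
        = (t⁻¹ • Xel y - t • Xel x) * s p + (t - t⁻¹) • (Xel y * p)) :
    ∀ p ∈ (spS (NnS n) : Submodule F (Laur F n)),
      t • (T p + (t⁻¹ - t) • p) - s p ∈ (spS (ZkS x) : Submodule F (Laur F n)) := by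
  have key : ∀ p ∈ (spS (NnS n) : Submodule F (Laur F n)),
      (t • (T + (t⁻¹ - t) • (1 : Module.End F (Laur F n))) - s) p ∈
        (spS (ZkS x) : Submodule F (Laur F n)) := by
    apply spS_map
    simp only [LinearMap.sub_apply, LinearMap.smul_apply, LinearMap.add_apply, Module.End.one_apply]
    apply mono_ind
    · rw [mono_zero_one, T_one hxy hs hT]
      have : s 1 = 1 := by
        rw [← mono_zero_one, hs]; congr 1
      rw [this]
      have : t • (t • (1 : Laur F n) + (t⁻¹ - t) • (1 : Laur F n)) - 1 = 0 := by
        rw [← add_smul, smul_smul, add_sub_cancel, mul_inv_cancel₀ ht, one_smul, sub_self]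
      rw [this]; exact Submodule.zero_mem _
    · intro j a ha ih
      have hm : mono a 1 ∈ (spS (NnS n) : Submodule F (Laur F n)) := mono_mem ha _
      have hTm : T (mono a 1) ∈ (spS (NnS n) : Submodule F (Laur F n)) := by
        obtain ⟨d, hd⟩ := mem_AdS_of_NnS hm
        exact spS_mono (AdS_le_NnS d) (T_mem hxy hs hT d _ hd)
      have hsm : s (mono a 1) ∈ (spS (NnS n) : Submodule F (Laur F n)) := by
        rw [hs]; exact mono_mem (mem_equivMapDomain_NnS _ ha) _
      rw [← Xel_mul_mono, T_X hxy hs hT, W_X hs]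
      set m := (mono a 1 : Laur F n)
      by_cases hx : j = x
      · subst hx
        have e : t • (Xel (Equiv.swap j y j) * T m + (if j = j then -(t - t⁻¹) else if j = y then t - t⁻¹ else 0) • (Xel y * m) + (t⁻¹ - t) • (Xel j * m)) - Xel (Equiv.swap j y j) * s m
          = Xel y * (t • (T m + (t⁻¹ - t) • m) - s m) + (t * (t⁻¹ - t)) • (Xel j * m) := by
          simp only [Equiv.swap_apply_left, if_true, Algebra.smul_def, map_sub, map_neg, map_mul]
          ring
        rw [e]
        exact Submodule.add_mem _ (X_mem_Zk' _ _ ih) (Submodule.smul_mem _ _ (X_mem_Zk _ hm))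
      · by_cases hy : j = y
        · subst hy
          have e : t • (Xel (Equiv.swap x j j) * T m + (if j = x then -(t - t⁻¹) else if j = j then t - t⁻¹ else 0) • (Xel j * m) + (t⁻¹ - t) • (Xel j * m)) - Xel (Equiv.swap x j j) * s m
            = Xel x * (t • T m - s m) := by
            simp only [Equiv.swap_apply_right, if_true, if_neg hx, Algebra.smul_def, map_sub]
            ring
          rw [e]
          exact X_mem_Zk _ (Submodule.sub_mem _ (Submodule.smul_mem _ _ hTm) hsm)
        · have e : t • (Xel (Equiv.swap x y j) * T m + (if j = x then -(t - t⁻¹) else if j = y then t - t⁻¹ else 0) • (Xel y * m) + (t⁻¹ - t) • (Xel j * m)) - Xel (Equiv.swap x y j) * s m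
            = Xel j * (t • (T m + (t⁻¹ - t) • m) - s m) := by
            rw [Equiv.swap_apply_of_ne_of_ne hx hy]
            simp only [if_neg hx, if_neg hy, Algebra.smul_def, map_sub, map_zero]
            ring
          rw [e]
          exact X_mem_Zk' _ _ ih
  intro p hp
  simpa using key p hp

end TT
lemma det_quad {M : Type*} [AddCommGroup M] [Module F M] [FiniteDimensional F M]
    (f : Module.End F M) (a b : F) (hab : a ≠ b)
    (h : (f - a • (1 : Module.End F M)) * (f - b • (1 : Module.End F M)) = 0) :
    ∃ r s : ℕ, LinearMap.det f = a ^ r * b ^ s := by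
  have hab' : a - b ≠ 0 := sub_ne_zero.2 hab
  set P : Module.End F M := (a - b)⁻¹ • (f - b • (1 : Module.End F M)) with hP
  have hf : f = b • (1 : Module.End F M) + (a - b) • P := by
    rw [hP, smul_smul, mul_inv_cancel₀ hab', one_smul]; abel
  have hfP : f * P = a • P := by
    have : (f - a • (1 : Module.End F M)) * P = 0 := by
      rw [hP, mul_smul_comm, h, smul_zero]
    rw [sub_mul, sub_eq_zero] at this
    rw [this, smul_mul_assoc, one_mul]
  have hPP : P * P = P := by
    nth_rw 1 [hP]
    rw [smul_mul_assoc, sub_mul, hfP, smul_mul_assoc, one_mul, ← sub_smul, smul_smul,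
      inv_mul_cancel₀ hab', one_smul]
  have hproj : LinearMap.IsProj (LinearMap.range P) P := by
    refine ⟨fun x => ⟨x, rfl⟩, ?_⟩
    rintro _ ⟨x, rfl⟩
    exact congrArg (fun g => g x) hPP
  have e := hproj.eq_conj_prodMap
  have e2 : f = ((LinearMap.range P).prodEquivOfIsCompl (LinearMap.ker P) hproj.isCompl).conj
      (LinearMap.prodMap (a • LinearMap.id) (b • LinearMap.id)) := by
    have : (LinearMap.prodMap (a • LinearMap.id) (b • LinearMap.id) :
        Module.End F (LinearMap.range P × LinearMap.ker P)) =
        b • LinearMap.id + (a - b) • LinearMap.prodMap LinearMap.id 0 := by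
      refine LinearMap.ext fun x => ?_
      ext <;> simp [← add_smul]
    rw [this, map_add, map_smul, map_smul, ← e, LinearEquiv.conj_id]
    exact hf
  refine ⟨Module.finrank F (LinearMap.range P), Module.finrank F (LinearMap.ker P), ?_⟩
  rw [e2, LinearEquiv.conj_apply, LinearMap.comp_assoc, LinearMap.det_conj, LinearMap.det_prodMap]
  simp

/-- `x` is, up to sign, a power of `t`. -/
def SgnPow (t x : F) : Prop := ∃ z : ℤ, x ^ 2 = t ^ z

lemma SgnPow.mul {t x y : F} (ht : t ≠ 0) (hx : SgnPow t x) (hy : SgnPow t y) : SgnPow t (x * y) := by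
  obtain ⟨a, ha⟩ := hx
  obtain ⟨b, hb⟩ := hy
  exact ⟨a + b, by rw [mul_pow, ha, hb, zpow_add₀ ht]⟩

lemma SgnPow.inv {t x : F} (hx : SgnPow t x) : SgnPow t x⁻¹ := by
  obtain ⟨a, ha⟩ := hx
  exact ⟨-a, by rw [inv_pow, ha, zpow_neg]⟩

lemma SgnPow.ne {t x : F} (ht : t ≠ 0) (hx : SgnPow t x) : x ≠ 0 := by
  obtain ⟨a, ha⟩ := hx
  rintro rfl
  exact zpow_ne_zero a ht (by simpa using ha.symm)

lemma SgnPow.pow {t x : F} (hx : SgnPow t x) (k : ℕ) : SgnPow t (x ^ k) := by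
  obtain ⟨a, ha⟩ := hx
  exact ⟨a * k, by rw [← pow_mul, mul_comm, pow_mul, ha, zpow_mul, zpow_natCast]⟩

/-- `f` preserves `U` with determinant a signed power of `t`. -/
def Gd {L : Type*} [AddCommGroup L] [Module F L] (t : F) (U : Submodule F L)
    (f : Module.End F L) : Prop :=
  ∃ h : ∀ x ∈ U, f x ∈ U, SgnPow t (LinearMap.det (f.restrict h))

section Gd
variable {L : Type*} [AddCommGroup L] [Module F L] {t : F} {U : Submodule F L}
  {f g : Module.End F L}

lemma Gd.one : Gd t U (1 : Module.End F L) := by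
  refine ⟨fun x hx => hx, 0, ?_⟩
  have : LinearMap.restrict (1 : Module.End F L) (fun x (hx : x ∈ U) => hx) = LinearMap.id := rfl
  rw [this]; simp

lemma Gd.mul (ht : t ≠ 0) (hf : Gd t U f) (hg : Gd t U g) : Gd t U (f * g) := by
  obtain ⟨a, ha⟩ := hf
  obtain ⟨b, hb⟩ := hg
  refine ⟨fun x hx => a _ (b _ hx), ?_⟩
  have : LinearMap.restrict (f * g) (fun x (hx : x ∈ U) => a _ (b _ hx)) =
    f.restrict a * g.restrict b := rfl
  rw [this, map_mul]
  exact ha.mul ht hb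

lemma Gd.pow (ht : t ≠ 0) (hf : Gd t U f) (k : ℕ) : Gd t U (f ^ k) := by
  induction k with
  | zero => rw [pow_zero]; exact Gd.one
  | succ k ih => rw [pow_succ]; exact ih.mul ht hf

lemma Gd.smul (ht : t ≠ 0) (hf : Gd t U f) {c : F} (hc : SgnPow t c) : Gd t U (c • f) := by
  obtain ⟨a, ha⟩ := hf
  refine ⟨fun x hx => U.smul_mem _ (a _ hx), ?_⟩
  have : LinearMap.restrict (c • f) (fun x (hx : x ∈ U) => U.smul_mem _ (a _ hx)) =
    c • f.restrict a := rfl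
  rw [this, LinearMap.det_smul]
  exact (hc.pow _).mul ht ha

lemma Gd.of_mul [FiniteDimensional F U] (ht : t ≠ 0) (hfg : Gd t U (f * g)) (hg : Gd t U g) :
    Gd t U f := by
  obtain ⟨a, ha⟩ := hfg
  obtain ⟨b, hb⟩ := hg
  have hne := hb.ne ht
  have hsurj : Function.Surjective (g.restrict b) := by
    have h2 := (LinearMap.isUnit_iff_isUnit_det (g.restrict b)).2 (isUnit_iff_ne_zero.2 hne)
    exact ((Module.End.isUnit_iff _).1 h2).2
  have c : ∀ x ∈ U, f x ∈ U := by
    intro x hx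
    obtain ⟨u, hu⟩ := hsurj ⟨x, hx⟩
    have := congrArg Subtype.val hu
    have h2 : g u = x := this
    rw [← h2]
    exact a _ u.2
  refine ⟨c, ?_⟩
  have : LinearMap.restrict (f * g) a = f.restrict c * g.restrict b := rfl
  rw [this, map_mul] at ha
  have h3 := ha.mul ht hb.inv
  rwa [mul_assoc, mul_inv_cancel₀ hne, mul_one] at h3

lemma Gd.quad [FiniteDimensional F U] (ht : t ≠ 0) (ht2 : t⁻¹ ≠ -t) (hU : ∀ x ∈ U, f x ∈ U)
    (h : (f - t⁻¹ • (1 : Module.End F L)) * (f - (-t) • (1 : Module.End F L)) = 0) : Gd t U f := by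
  refine ⟨hU, ?_⟩
  obtain ⟨r, s, e⟩ := det_quad (f.restrict hU) (t⁻¹) (-t) ht2 (by
    refine LinearMap.ext fun x => Subtype.ext ?_
    exact congrArg (fun g => g x.1) h)
  rw [e]
  refine SgnPow.mul ht (SgnPow.pow ⟨-2, ?_⟩ _) (SgnPow.pow ⟨2, ?_⟩ _)
  · rw [zpow_neg, inv_pow]; norm_cast
  · rw [neg_sq]; norm_cast

end Gd

lemma ratfunc_pow {q : ℂ} {m : ℕ} {z : ℤ}
    (h : (algebraMap ℂ (RatFunc ℂ) q) ^ m = (RatFunc.X : RatFunc ℂ) ^ z) : q ^ m = 1 := by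
  have hk : ∀ k : ℕ, RatFunc.intDegree ((RatFunc.X : RatFunc ℂ) ^ k) = k := by
    intro k
    rw [← RatFunc.algebraMap_X, ← map_pow, RatFunc.intDegree_polynomial, Polynomial.natDegree_X_pow]
  have hz : RatFunc.intDegree ((RatFunc.X : RatFunc ℂ) ^ z) = z := by
    obtain ⟨k, rfl | rfl⟩ := z.eq_nat_or_neg
    · rw [zpow_natCast, hk]
    · rw [zpow_neg, zpow_natCast, RatFunc.intDegree_inv, hk]
  have h0 : RatFunc.intDegree ((algebraMap ℂ (RatFunc ℂ) q) ^ m) = 0 := by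
    rw [← map_pow, RatFunc.algebraMap_eq_C, RatFunc.intDegree_C]
  have : z = 0 := by rw [← hz, ← h, h0]
  rw [this, zpow_zero, ← map_pow] at h
  exact (algebraMap ℂ (RatFunc ℂ)).injective (by rw [h, map_one])

lemma aF_mem {M : Type*} [Monoid M] (S : Submonoid M) {f : ℕ → M} {s len : ℕ}
    (h : ∀ k, s ≤ k → k < s + len → f k ∈ S) : aF f s len ∈ S := by
  apply Submonoid.list_prod_mem
  intro x hx
  obtain ⟨k, hk, rfl⟩ := List.mem_map.1 hx
  rw [List.mem_range'_1] at hk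
  exact h k hk.1 hk.2

lemma dF_mem {M : Type*} [Monoid M] (S : Submonoid M) {f : ℕ → M} {s len : ℕ}
    (h : ∀ k, s ≤ k → k < s + len → f k ∈ S) : dF f s len ∈ S := by
  apply Submonoid.list_prod_mem
  intro x hx
  obtain ⟨k, hk, rfl⟩ := List.mem_map.1 (List.mem_reverse.1 hx)
  rw [List.mem_range'_1] at hk
  exact h k hk.1 hk.2

lemma aF_succ {M : Type*} [Monoid M] (f : ℕ → M) (i : ℕ) : aF f 0 (i + 1) = aF f 0 i * f i := by
  simp [aF, List.range'_1_concat]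

/-- Operators preserving `N`. -/
def presS (N : Submodule F (Laur F n)) : Submonoid (Module.End F (Laur F n)) where
  carrier := {f | ∀ p ∈ N, f p ∈ N}
  one_mem' := fun _ h => h
  mul_mem' := fun ha hb p hp => ha _ (hb p hp)

/-- Operators preserving and reflecting `N`. -/
def iffS (N : Submodule F (Laur F n)) : Submonoid (Module.End F (Laur F n)) where
  carrier := {f | ∀ p, f p ∈ N ↔ p ∈ N}
  one_mem' := fun _ => Iff.rfl
  mul_mem' := fun ha hb p => (ha _).trans (hb p)

/-- Operators that are good on `U`. -/
def gdS (t : F) (ht : t ≠ 0) (U : Submodule F (Laur F n)) :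
    Submonoid (Module.End F (Laur F n)) where
  carrier := {f | Gd t U f}
  one_mem' := Gd.one
  mul_mem' := fun ha hb => Gd.mul ht ha hb

lemma AdS_finite (d : ℕ) : (AdS n d).Finite := by
  have : AdS n d ⊆ (fun a : Fin n →₀ ℤ => (a : Fin n → ℤ)) ⁻¹' Set.Icc 0 (fun _ => (d : ℤ)) := by
    intro a ha
    refine ⟨fun i => ha.1 i, fun i => ?_⟩
    have h1 : a i ≤ ∑ i, a i := Finset.single_le_sum (fun i _ => ha.1 i) (Finset.mem_univ i)
    have := ha.2
    change a i ≤ d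
    omega
  exact (Set.Finite.preimage (DFunLike.coe_injective.injOn) (Set.finite_Icc _ _)).subset this

lemma spS_finite {S : Set (Fin n →₀ ℤ)} (h : S.Finite) :
    FiniteDimensional F (spS S : Submodule F (Laur F n)) := by
  rw [spS_eq_span]
  exact FiniteDimensional.span_of_finite F (h.image _)

section PI
variable [NeZero n] {q : F} {pi : Module.End F (Laur F n)}

lemma rot_pow (k : ℕ) (j : Fin n) : ((finRotate n).symm ^ k) j = j - Fin.ofNat n k := by
  induction k with
  | zero => simp
  | succ k ih =>
    have e : Fin.ofNat n (k + 1) = Fin.ofNat n k + 1 := by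
      apply Fin.ext
      simp [Fin.val_add, Fin.ofNat]
    rw [pow_succ', Equiv.Perm.mul_apply, ih, finRotate_symm_apply, e, sub_sub]

lemma rot_pow_n : ((finRotate n).symm ^ n : Equiv.Perm (Fin n)) = 1 := by
  ext1 j
  rw [rot_pow]
  simp [Fin.ofNat]

lemma pi_pow (hpi : ∀ (v : Fin n →₀ ℤ) (r : F),
      pi (mono v r) = q ^ (v 0) • mono (Finsupp.equivMapDomain (finRotate n).symm v) r) (hq : q ≠ 0)
    (v : Fin n →₀ ℤ) (r : F) (k : ℕ) :
    (pi ^ k) (mono v r) = q ^ (∑ j ∈ Finset.range k, v (Fin.ofNat n j)) •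
      mono (Finsupp.equivMapDomain ((finRotate n).symm ^ k) v) r := by
  have hrot : ∀ k : ℕ, (((finRotate n).symm ^ k).symm) 0 = Fin.ofNat n k := by
    intro k
    rw [Equiv.symm_apply_eq, rot_pow, sub_self]
  induction k with
  | zero =>
    have : v = Finsupp.equivMapDomain 1 v := (Finsupp.equivMapDomain_refl v).symm
    simp [← this]
  | succ k ih =>
    rw [pow_succ' pi, Module.End.mul_apply, ih, map_smul, hpi, smul_smul, Finset.sum_range_succ,
      zpow_add₀ hq, Finsupp.equivMapDomain_apply, hrot, ← Finsupp.equivMapDomain_trans, pow_succ']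
    rfl

lemma pi_pow_n (hpi : ∀ (v : Fin n →₀ ℤ) (r : F),
      pi (mono v r) = q ^ (v 0) • mono (Finsupp.equivMapDomain (finRotate n).symm v) r) (hq : q ≠ 0)
    (v : Fin n →₀ ℤ) (r : F) :
    (pi ^ n) (mono v r) = q ^ (∑ j, v j) • mono v r := by
  rw [pi_pow hpi hq, rot_pow_n]
  congr 1
  · congr 1
    rw [Finset.sum_range]
    refine Finset.sum_congr rfl fun j _ => ?_
    congr 1
    apply Fin.ext
    simp [Fin.ofNat, Nat.mod_eq_of_lt j.2]
  · congr 1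
    exact Finsupp.equivMapDomain_refl v

lemma pi_pow_n_coeff (hpi : ∀ (v : Fin n →₀ ℤ) (r : F),
      pi (mono v r) = q ^ (v 0) • mono (Finsupp.equivMapDomain (finRotate n).symm v) r) (hq : q ≠ 0)
    (p : Laur F n) (v : Fin n →₀ ℤ) :
    ((pi ^ n) p).coeff v = q ^ (∑ j, v j) * p.coeff v := by
  classical
  induction p using AddMonoidAlgebra.induction_linear with
  | zero => simp
  | add x y hx hy => simp [hx, hy, mul_add]
  | single m r =>
    have := pi_pow_n hpi hq m r
    rw [mono] at this
    rw [this]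
    by_cases h : m = v
    · subst h; simp
    · simp [h]

lemma pi_mem_iff (hpi : ∀ (v : Fin n →₀ ℤ) (r : F),
      pi (mono v r) = q ^ (v 0) • mono (Finsupp.equivMapDomain (finRotate n).symm v) r) (hq : q ≠ 0)
    (d : ℕ) : pi ∈ iffS (spS (AdS n d) : Submodule F (Laur F n)) := by
  have h1 : ∀ p ∈ (spS (AdS n d) : Submodule F (Laur F n)),
      pi p ∈ (spS (AdS n d) : Submodule F (Laur F n)) := by
    apply spS_map
    intro a ha
    rw [hpi]
    exact Submodule.smul_mem _ _ (mono_mem (mem_equivMapDomain_AdS _ ha) _)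
  intro p
  refine ⟨fun h => ?_, h1 p⟩
  have h2 : pi ^ (n - 1) ∈ presS (spS (AdS n d) : Submodule F (Laur F n)) :=
    Submonoid.pow_mem (presS (spS (AdS n d) : Submodule F (Laur F n))) (show pi ∈ presS _ from h1) _
  have h3 := h2 _ h
  have e : (pi ^ (n - 1)) (pi p) = (pi ^ n) p := by
    rw [← Module.End.mul_apply, ← pow_succ, Nat.sub_add_cancel (NeZero.one_le)]
  rw [e, AddMonoidAlgebra.mem_supported'] at h3
  rw [AddMonoidAlgebra.mem_supported']
  intro m hm
  have := h3 m hm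
  rw [pi_pow_n_coeff hpi hq] at this
  exact (mul_eq_zero.1 this).resolve_left (zpow_ne_zero _ hq)

lemma pi_pow_sub (hpi : ∀ (v : Fin n →₀ ℤ) (r : F),
      pi (mono v r) = q ^ (v 0) • mono (Finsupp.equivMapDomain (finRotate n).symm v) r) (hq : q ≠ 0)
    (d : ℕ) : ∀ p ∈ (spS (AdS n (d + 1)) : Submodule F (Laur F n)),
      (pi ^ n) p - q ^ d • p ∈ (spS (AdS n d) : Submodule F (Laur F n)) := by
  intro p hp
  rw [AddMonoidAlgebra.mem_supported'] at *
  intro m hm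
  simp only [AddMonoidAlgebra.coeff_sub, AddMonoidAlgebra.coeff_smul, Finsupp.sub_apply,
    Finsupp.smul_apply, smul_eq_mul]
  rw [pi_pow_n_coeff hpi hq]
  by_cases h : m ∈ AdS n (d + 1)
  · have h2 : ∑ i, m i = d := by
      have a1 := h.2
      have a2 : ¬ (∑ i, m i < d) := fun h3 => hm ⟨h.1, h3⟩
      push_cast at a1
      omega
    rw [h2, zpow_natCast, sub_self]
  · rw [hp m h]; simp

/-- The partial cycles. -/
def cyc (n : ℕ) : ℕ → Equiv.Perm (Fin n)
  | 0 => 1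
  | i + 1 => cyc n i * (if h : i + 1 < n then
      Equiv.swap ⟨i, Nat.lt_of_succ_lt h⟩ ⟨i + 1, h⟩ else (1 : Equiv.Perm (Fin n)))

lemma cyc_val (i : ℕ) (hi : i < n) (j : Fin n) :
    (cyc n i j).val = if j.val < i then j.val + 1 else if j.val = i then 0 else j.val := by
  induction i generalizing j with
  | zero =>
    simp only [cyc, Equiv.Perm.one_apply]
    split_ifs <;> omega
  | succ i ih =>
    rw [cyc, dif_pos hi, Equiv.Perm.mul_apply, ih (by omega)]
    rw [Equiv.swap_apply_def]
    split_ifs <;> simp_all [Fin.ext_iff] <;> omega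

lemma rot_cyc (j : Fin n) : (finRotate n).symm (cyc n (n - 1) j) = j := by
  have hn : 1 ≤ n := NeZero.one_le
  rw [Equiv.symm_apply_eq, finRotate_apply]
  apply Fin.ext
  rw [cyc_val _ (by omega), Fin.val_add]
  have := j.2
  have h1 : ((1 : Fin n) : ℕ) = 1 % n := rfl
  rw [h1, Nat.add_mod_mod]
  split_ifs with h2 h3
  · rw [Nat.mod_eq_of_lt]; omega
  · rw [h3, Nat.sub_add_cancel hn, Nat.mod_self]
  · omega

lemma pi_cyc {w : Module.End F (Laur F n)} (hpi : ∀ (v : Fin n →₀ ℤ) (r : F),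
      pi (mono v r) = q ^ (v 0) • mono (Finsupp.equivMapDomain (finRotate n).symm v) r)
    (hw : ∀ v r, w (mono v r) = mono (Finsupp.equivMapDomain (cyc n (n - 1)) v) r)
    (l : Fin n) (hl : l.val = n - 1) :
    ∀ p ∈ (spS (NnS n) : Submodule F (Laur F n)),
      pi (w p) - p ∈ (spS (ZkS l) : Submodule F (Laur F n)) := by
  have hn : 1 ≤ n := NeZero.one_le
  have key : ∀ p ∈ (spS (NnS n) : Submodule F (Laur F n)),
      (pi * w - 1) p ∈ (spS (ZkS l) : Submodule F (Laur F n)) := by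
    apply spS_map
    intro a ha
    have e : Finsupp.equivMapDomain (finRotate n).symm
        (Finsupp.equivMapDomain (cyc n (n - 1)) a) = a := by
      rw [← Finsupp.equivMapDomain_trans]
      have : (cyc n (n - 1)).trans (finRotate n).symm = Equiv.refl _ := by
        ext1 j; exact rot_cyc j
      rw [this, Finsupp.equivMapDomain_refl]
    have e2 : (Finsupp.equivMapDomain (cyc n (n - 1)) a) 0 = a l := by
      rw [Finsupp.equivMapDomain_apply]
      congr 1
      rw [Equiv.symm_apply_eq]
      apply Fin.ext
      rw [cyc_val _ (by omega), if_neg (by omega), if_pos hl]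
      rfl
    simp only [LinearMap.sub_apply, Module.End.mul_apply, Module.End.one_apply]
    rw [hw, hpi, e, e2]
    by_cases h0 : a l = 0
    · rw [h0, zpow_zero, one_smul, sub_self]; exact Submodule.zero_mem _
    · have hm : a ∈ ZkS l := ⟨ha, by have := ha l; omega⟩
      exact Submodule.sub_mem _ (Submodule.smul_mem _ _ (mono_mem hm _)) (mono_mem hm _)
  intro p hp
  simpa using key p hp

lemma pi_Zk (hpi : ∀ (v : Fin n →₀ ℤ) (r : F),
      pi (mono v r) = q ^ (v 0) • mono (Finsupp.equivMapDomain (finRotate n).symm v) r)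
    (l : Fin n) (hl : l.val = n - 1) :
    ∀ p ∈ (spS (ZkS 0) : Submodule F (Laur F n)),
      pi p ∈ (spS (ZkS l) : Submodule F (Laur F n)) := by
  have hn : 1 ≤ n := NeZero.one_le
  apply spS_map
  intro a ha
  rw [hpi]
  refine Submodule.smul_mem _ _ (mono_mem ?_ _)
  refine ⟨mem_equivMapDomain_NnS _ ha.1, ?_⟩
  have : (finRotate n).symm.symm l = 0 := by
    rw [Equiv.symm_symm, finRotate_apply]
    apply Fin.ext
    rw [Fin.val_add, hl]
    have h1 : ((1 : Fin n) : ℕ) = 1 % n := rfl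
    rw [h1, Nat.add_mod_mod, Nat.sub_add_cancel hn, Nat.mod_self]
    rfl
  rw [Finsupp.equivMapDomain_apply, this]
  exact ha.2

lemma chain {t : F} (ht : t ≠ 0) (W : Equiv.Perm (Fin n) → Module.End F (Laur F n))
    (hW : ∀ (w : Equiv.Perm (Fin n)) (v : Fin n →₀ ℤ) (r : F),
      W w (mono v r) = mono (Finsupp.equivMapDomain w v) r)
    (T Ti : ℕ → Module.End F (Laur F n))
    (hT : ∀ (k : ℕ) (hk : k + 1 < n) (p : Laur F n),
      (Xel ⟨k + 1, hk⟩ - Xel ⟨k, Nat.lt_of_succ_lt hk⟩) * T k p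
        = (t⁻¹ • Xel ⟨k + 1, hk⟩ - t • Xel ⟨k, Nat.lt_of_succ_lt hk⟩)
            * W (Equiv.swap ⟨k, Nat.lt_of_succ_lt hk⟩ ⟨k + 1, hk⟩) p
          + (t - t⁻¹) • (Xel ⟨k + 1, hk⟩ * p))
    (hTi : ∀ k, Ti k = T k + (t⁻¹ - t) • (1 : Module.End F (Laur F n)))
    (i : ℕ) (hi : i < n) :
    ∀ p ∈ (spS (NnS n) : Submodule F (Laur F n)),
      t ^ i • (aF Ti 0 i) p - W (cyc n i) p ∈ (spS (ZkS 0) : Submodule F (Laur F n)) := by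
  induction i with
  | zero =>
    intro p hp
    have h1 : W 1 = 1 := by
      apply end_ext
      intro a
      rw [hW]
      exact congrArg (fun b => mono b 1) (Finsupp.equivMapDomain_refl a)
    simp [aF, cyc, h1]
  | succ i ih =>
    intro p hp
    have hne : (⟨i, Nat.lt_of_succ_lt hi⟩ : Fin n) ≠ ⟨i + 1, hi⟩ := by simp [Fin.ext_iff]
    have hc := Ti_congr ht hne (hW _) (hT i hi) p hp
    set s := Equiv.swap (⟨i, Nat.lt_of_succ_lt hi⟩ : Fin n) ⟨i + 1, hi⟩ with hs
    have hTip : Ti i p = T i p + (t⁻¹ - t) • p := by rw [hTi]; simp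
    rw [← hTip] at hc
    obtain ⟨r, hr, hre⟩ := exists_of_mem_Zk _ hc
    have hWN : ∀ w : Equiv.Perm (Fin n), ∀ p ∈ (spS (NnS n) : Submodule F (Laur F n)),
        W w p ∈ (spS (NnS n) : Submodule F (Laur F n)) := by
      intro w
      apply spS_map
      intro a ha
      rw [hW]
      exact mono_mem (mem_equivMapDomain_NnS _ ha) _
    have hu : t • Ti i p = W s p + Xel ⟨i, Nat.lt_of_succ_lt hi⟩ * r := by
      rw [← hre]; abel
    have huN : t • Ti i p ∈ (spS (NnS n) : Submodule F (Laur F n)) := by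
      rw [hu]
      exact Submodule.add_mem _ (hWN _ _ hp) (X_mem_NnS _ hr)
    have h1 := ih (by omega) _ huN
    have hWW : W (cyc n (i + 1)) = W (cyc n i) * W s := by
      apply end_ext
      intro a
      rw [Module.End.mul_apply, hW, hW, hW, cyc, dif_pos hi, ← Finsupp.equivMapDomain_trans]
      rfl
    have hc0 : cyc n i ⟨i, Nat.lt_of_succ_lt hi⟩ = 0 := by
      apply Fin.ext
      rw [cyc_val _ (by omega)]
      simp
    have e : W (cyc n i) (t • Ti i p) = W (cyc n (i + 1)) p + Xel 0 * W (cyc n i) r := by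
      rw [hu, map_add, W_X (hW _), hc0, hWW]; rfl
    have e2 : t ^ (i + 1) • (aF Ti 0 (i + 1)) p - W (cyc n (i + 1)) p =
        (t ^ i • (aF Ti 0 i) (t • Ti i p) - W (cyc n i) (t • Ti i p)) + Xel 0 * W (cyc n i) r := by
      rw [e, aF_succ, Module.End.mul_apply, map_smul, smul_smul, ← pow_succ]; abel
    rw [e2]
    exact Submodule.add_mem _ h1 (X_mem_Zk _ (hWN _ _ hr))

end PI

end Helpers


theorem quad_aux {K M : Type*} [Field K] [AddCommGroup M] [Module K M] (t : K) (ht : t ≠ 0)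
    (T Ti : Module.End K M) (h : Ti = T + (t⁻¹ - t) • (1 : Module.End K M)) (h2 : Ti * T = 1) :
    (Ti - t⁻¹ • (1 : Module.End K M)) * (Ti - (-t) • (1 : Module.End K M)) = 0 := by
  have e : Ti - (-t) • (1 : Module.End K M) = T + t⁻¹ • (1 : Module.End K M) := by
    rw [h, neg_smul, sub_smul]; abel
  have e2 : T = Ti - (t⁻¹ - t) • (1 : Module.End K M) := by
    rw [h, add_sub_cancel_right]
  rw [e, sub_mul, mul_add, h2, smul_mul_assoc, one_mul, mul_smul_comm, mul_one, e2, smul_add,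
    smul_sub, smul_smul, smul_smul, mul_sub, inv_mul_cancel₀ ht, sub_smul, one_smul]
  abel

/-- Over `F = ℂ(τ)` (realised as `RatFunc ℂ`), the operators `T_k`, `X_i`,
`Y'_i = τ^{n-1} Y_i`, `(Y'_i)⁻¹` and `D'_i` map the polynomial subring `P ⊆ L` into itself,
and the only invariant `F`-subspaces `V ⊆ P` are `{0}` and `P`. -/
theorem statement14
    (n : ℕ) [NeZero n]
    (q₀ : ℂ) (hq₀ : q₀ ≠ 0) (hq₀root : ∀ m : ℕ, m ≠ 0 → q₀ ^ m ≠ 1)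
    -- the action of the symmetric group permuting the variables
    (W : Equiv.Perm (Fin n) → Module.End (RatFunc ℂ) (Laur (RatFunc ℂ) n))
    (hW : ∀ (w : Equiv.Perm (Fin n)) (v : Fin n →₀ ℤ) (r : (RatFunc ℂ)),
      W w (mono v r) = mono (Finsupp.equivMapDomain w v) r)
    -- the Demazure–Lusztig operators `T_k` and their inverses `Ti k = T k + τ⁻¹ - τ`
    (T Ti : ℕ → Module.End (RatFunc ℂ) (Laur (RatFunc ℂ) n))
    (hT : ∀ (k : ℕ) (hk : k + 1 < n) (p : Laur (RatFunc ℂ) n),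
      (Xel ⟨k + 1, hk⟩ - Xel ⟨k, Nat.lt_of_succ_lt hk⟩) * T k p
        = ((RatFunc.X : RatFunc ℂ)⁻¹ • Xel ⟨k + 1, hk⟩ - (RatFunc.X : RatFunc ℂ) • Xel ⟨k, Nat.lt_of_succ_lt hk⟩)
            * W (Equiv.swap ⟨k, Nat.lt_of_succ_lt hk⟩ ⟨k + 1, hk⟩) p
          + ((RatFunc.X : RatFunc ℂ) - (RatFunc.X : RatFunc ℂ)⁻¹) • (Xel ⟨k + 1, hk⟩ * p))
    (hTi : ∀ k, Ti k = T k + ((RatFunc.X : RatFunc ℂ)⁻¹ - (RatFunc.X : RatFunc ℂ)) • (1 : Module.End (RatFunc ℂ) (Laur (RatFunc ℂ) n)))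
    (hTinv : ∀ k, k + 1 < n → T k * Ti k = 1 ∧ Ti k * T k = 1)
    -- the operator `π⁻¹`
    (piInv : Module.End (RatFunc ℂ) (Laur (RatFunc ℂ) n))
    (hpiInv : ∀ (v : Fin n →₀ ℤ) (r : (RatFunc ℂ)),
      piInv (mono v r)
        = (algebraMap ℂ (RatFunc ℂ) q₀) ^ (v 0) • mono (Finsupp.equivMapDomain (finRotate n).symm v) r)
    -- the operators `Y_i = T_i ⋯ T_{n-1} ⬝ π⁻¹ ⬝ T_1⁻¹ ⋯ T_{i-1}⁻¹` and their inverses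
    (Y Yi : ℕ → Module.End (RatFunc ℂ) (Laur (RatFunc ℂ) n))
    (hY : ∀ i, Y i = aF T i (n - 1 - i) * piInv * aF Ti 0 i)
    (hYinv : ∀ i, i < n → Y i * Yi i = 1 ∧ Yi i * Y i = 1)
    -- the renormalised operators `Y'_i = τ^{n-1} Y_i`, their inverses, and `D'_i`
    (Y' Y'i : ℕ → Module.End (RatFunc ℂ) (Laur (RatFunc ℂ) n))
    (hY' : ∀ i, Y' i = (RatFunc.X : RatFunc ℂ) ^ (n - 1) • Y i)
    (hY'inv : ∀ i, i < n → Y' i * Y'i i = 1 ∧ Y'i i * Y' i = 1)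
    (D' : ℕ → Module.End (RatFunc ℂ) (Laur (RatFunc ℂ) n))
    (hD' : ∀ i, D' i = aF T i (n - 1 - i)
        * ((((algebraMap ℂ (RatFunc ℂ) q₀)) - ((algebraMap ℂ (RatFunc ℂ) q₀))⁻¹)⁻¹ •
            (XinvOp (n - 1) * (Y' (n - 1) - Y'i (n - 1))))
        * dF T i (n - 1 - i))
    :
    ((∀ k : ℕ, k + 1 < n → ∀ p ∈ polySub (RatFunc ℂ) n, T k p ∈ polySub (RatFunc ℂ) n) ∧
     (∀ i : ℕ, i < n → ∀ p ∈ polySub (RatFunc ℂ) n,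
        XOp i p ∈ polySub (RatFunc ℂ) n ∧ Y' i p ∈ polySub (RatFunc ℂ) n ∧
        Y'i i p ∈ polySub (RatFunc ℂ) n ∧ D' i p ∈ polySub (RatFunc ℂ) n)) ∧
    (∀ V : Submodule (RatFunc ℂ) (Laur (RatFunc ℂ) n), V ≤ polySub (RatFunc ℂ) n →
      (∀ k : ℕ, k + 1 < n → ∀ p ∈ V, T k p ∈ V) →
      (∀ i : ℕ, i < n → ∀ p ∈ V,
        XOp i p ∈ V ∧ Y' i p ∈ V ∧ Y'i i p ∈ V ∧ D' i p ∈ V) →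
      V = ⊥ ∨ V = polySub (RatFunc ℂ) n) := by
  have hn : 1 ≤ n := NeZero.one_le
  set t : RatFunc ℂ := RatFunc.X with htdef
  have ht : t ≠ 0 := RatFunc.X_ne_zero
  set q : RatFunc ℂ := algebraMap ℂ (RatFunc ℂ) q₀ with hqdef
  have hq : q ≠ 0 := by
    rw [hqdef, Ne, map_eq_zero]; exact hq₀
  have hqq : q - q⁻¹ ≠ 0 := by
    intro h
    have h2 : q = q⁻¹ := sub_eq_zero.1 h
    have h3 : q ^ 2 = 1 := by
      rw [pow_two]; nth_rw 2 [h2]; exact mul_inv_cancel₀ hq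
    rw [hqdef, ← map_pow] at h3
    exact hq₀root 2 two_ne_zero ((algebraMap ℂ (RatFunc ℂ)).injective (by rw [h3, map_one]))
  have ht2 : t⁻¹ ≠ -t := by
    intro h
    have := congrArg RatFunc.intDegree h
    rw [RatFunc.intDegree_inv, RatFunc.intDegree_neg, htdef, RatFunc.intDegree_X] at this
    omega
  rw [polySub_eq]
  -- invariance of the degree filtration
  have hTA : ∀ d k, k + 1 < n → T k ∈ presS (spS (AdS n d) : Submodule (RatFunc ℂ) (Laur (RatFunc ℂ) n)) := by
    intro d k hk
    have hne : (⟨k, Nat.lt_of_succ_lt hk⟩ : Fin n) ≠ ⟨k + 1, hk⟩ := by simp [Fin.ext_iff]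
    exact T_mem hne (hW _) (hT k hk) d
  have hTiN : ∀ (N : Submodule (RatFunc ℂ) (Laur (RatFunc ℂ) n)) (k : ℕ), T k ∈ presS N → Ti k ∈ presS N := by
    intro N k h p hp
    rw [hTi]
    exact N.add_mem (h p hp) (N.smul_mem _ hp)
  have hTI : ∀ d k, k + 1 < n → T k ∈ iffS (spS (AdS n d) : Submodule (RatFunc ℂ) (Laur (RatFunc ℂ) n)) := by
    intro d k hk p
    refine ⟨fun h => ?_, hTA d k hk p⟩
    have := hTiN _ k (hTA d k hk) _ h
    rwa [← Module.End.mul_apply, (hTinv k hk).2] at this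
  have hTiI : ∀ d k, k + 1 < n → Ti k ∈ iffS (spS (AdS n d) : Submodule (RatFunc ℂ) (Laur (RatFunc ℂ) n)) := by
    intro d k hk p
    refine ⟨fun h => ?_, hTiN _ k (hTA d k hk) p⟩
    have := hTA d k hk _ h
    rwa [← Module.End.mul_apply, (hTinv k hk).1] at this
  have hYI : ∀ d i, i < n → Y' i ∈ iffS (spS (AdS n d) : Submodule (RatFunc ℂ) (Laur (RatFunc ℂ) n)) := by
    intro d i hi
    have h1 : Y i ∈ iffS (spS (AdS n d) : Submodule (RatFunc ℂ) (Laur (RatFunc ℂ) n)) := by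
      rw [hY]
      refine mul_mem (mul_mem (aF_mem _ fun k _ h2 => hTI d k (by omega)) (pi_mem_iff hpiInv hq d))
        (aF_mem _ fun k _ h2 => hTiI d k (by omega))
    intro p
    rw [hY', LinearMap.smul_apply, Submodule.smul_mem_iff _ (pow_ne_zero _ ht)]
    exact h1 p
  have hYiA : ∀ d i, i < n → Y'i i ∈ presS (spS (AdS n d) : Submodule (RatFunc ℂ) (Laur (RatFunc ℂ) n)) := by
    intro d i hi p hp
    rw [← hYI d i hi, ← Module.End.mul_apply, (hY'inv i hi).1]
    exact hp
  have toN : ∀ f : Module.End (RatFunc ℂ) (Laur (RatFunc ℂ) n),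
      (∀ d, f ∈ presS (spS (AdS n d) : Submodule (RatFunc ℂ) (Laur (RatFunc ℂ) n))) →
      f ∈ presS (spS (NnS n) : Submodule (RatFunc ℂ) (Laur (RatFunc ℂ) n)) := by
    intro f hf p hp
    obtain ⟨d, hd⟩ := mem_AdS_of_NnS hp
    exact spS_mono (AdS_le_NnS d) (hf d p hd)
  have hTN : ∀ k, k + 1 < n → T k ∈ presS (spS (NnS n) : Submodule (RatFunc ℂ) (Laur (RatFunc ℂ) n)) :=
    fun k hk => toN _ fun d => hTA d k hk
  have hYN : ∀ i, i < n → Y' i ∈ presS (spS (NnS n) : Submodule (RatFunc ℂ) (Laur (RatFunc ℂ) n)) :=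
    fun i hi => toN _ fun d p hp => (hYI d i hi p).2 hp
  have hYiN : ∀ i, i < n → Y'i i ∈ presS (spS (NnS n) : Submodule (RatFunc ℂ) (Laur (RatFunc ℂ) n)) :=
    fun i hi => toN _ fun d => hYiA d i hi
  have hnn : n - 1 < n := by omega
  -- congruence modulo the last variable
  have hYlast : Y' (n - 1) = t ^ (n - 1) • (piInv * aF Ti 0 (n - 1)) := by
    rw [hY', hY]
    simp [aF]
  have hcong : ∀ p ∈ (spS (NnS n) : Submodule (RatFunc ℂ) (Laur (RatFunc ℂ) n)),
      Y' (n - 1) p - p ∈ (spS (ZkS ⟨n - 1, hnn⟩) : Submodule (RatFunc ℂ) (Laur (RatFunc ℂ) n)) := by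
    intro p hp
    have h1 := chain ht W hW T Ti hT hTi (n - 1) hnn p hp
    have h2 := pi_Zk hpiInv ⟨n - 1, hnn⟩ rfl _ h1
    have h3 := pi_cyc hpiInv (hW _) ⟨n - 1, hnn⟩ rfl p hp
    have h4 := Submodule.add_mem _ h2 h3
    rw [map_sub, sub_add_sub_cancel, map_smul] at h4
    rw [hYlast]
    exact h4
  have hDl : ∀ p ∈ (spS (NnS n) : Submodule (RatFunc ℂ) (Laur (RatFunc ℂ) n)),
      XinvEl ⟨n - 1, hnn⟩ * (Y' (n - 1) p - Y'i (n - 1) p) ∈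
        (spS (NnS n) : Submodule (RatFunc ℂ) (Laur (RatFunc ℂ) n)) := by
    intro p hp
    apply Xinv_mem_NnS
    have h1 := hcong p hp
    have h2 := hcong _ (hYiN _ hnn p hp)
    rw [← Module.End.mul_apply, (hY'inv _ hnn).1, Module.End.one_apply] at h2
    have h3 := Submodule.add_mem _ h1 h2
    rwa [sub_add_sub_cancel] at h3
  have hXinv : ∀ p : Laur (RatFunc ℂ) n, XinvOp (n - 1) p = XinvEl ⟨n - 1, hnn⟩ * p := by
    intro p
    rw [XinvOp, dif_pos hnn]; rfl
  have hDlast : ∀ p, D' (n - 1) p =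
      (q - q⁻¹)⁻¹ • (XinvEl ⟨n - 1, hnn⟩ * (Y' (n - 1) p - Y'i (n - 1) p)) := by
    intro p
    rw [hD', ← LinearMap.sub_apply, ← hXinv]
    simp [aF, dF]
  refine ⟨⟨hTN, fun i hi p hp => ⟨?_, hYN i hi p hp, hYiN i hi p hp, ?_⟩⟩, ?_⟩
  · rw [XOp, dif_pos hi]
    exact X_mem_NnS _ hp
  · have : D' i ∈ presS (spS (NnS n) : Submodule (RatFunc ℂ) (Laur (RatFunc ℂ) n)) := by
      rw [hD']
      refine mul_mem (mul_mem (aF_mem _ fun k _ h2 => hTN k (by omega)) ?_)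
        (dF_mem _ fun k _ h2 => hTN k (by omega))
      intro p hp
      rw [LinearMap.smul_apply, Module.End.mul_apply, hXinv]
      exact Submodule.smul_mem _ _ (hDl p hp)
    exact this p hp
  intro V hV hVT hVX
  by_cases hbot : V = ⊥
  · exact Or.inl hbot
  right
  classical
  have hex : ∃ d, V ⊓ (spS (AdS n d) : Submodule (RatFunc ℂ) (Laur (RatFunc ℂ) n)) ≠ ⊥ := by
    obtain ⟨v, hv, hv0⟩ := Submodule.exists_mem_ne_zero_of_ne_bot hbot
    obtain ⟨d, hd⟩ := mem_AdS_of_NnS (hV hv)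
    refine ⟨d, fun h => hv0 ?_⟩
    have : v ∈ V ⊓ (spS (AdS n d) : Submodule (RatFunc ℂ) (Laur (RatFunc ℂ) n)) := ⟨hv, hd⟩
    rwa [h, Submodule.mem_bot] at this
  obtain ⟨d, hdU, hdmin⟩ : ∃ d, V ⊓ (spS (AdS n (d + 1)) : Submodule (RatFunc ℂ) (Laur (RatFunc ℂ) n)) ≠ ⊥ ∧
      V ⊓ (spS (AdS n d) : Submodule (RatFunc ℂ) (Laur (RatFunc ℂ) n)) = ⊥ := by
    have h0 : Nat.find hex ≠ 0 := by
      intro h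
      have := Nat.find_spec hex
      rw [h, AdS_zero] at this
      simp at this
    obtain ⟨d, hd⟩ := Nat.exists_eq_succ_of_ne_zero h0
    refine ⟨d, ?_, ?_⟩
    · have := Nat.find_spec hex
      rwa [hd] at this
    · have := Nat.find_min hex (m := d) (by omega)
      rwa [not_not] at this
  set U := V ⊓ (spS (AdS n (d + 1)) : Submodule (RatFunc ℂ) (Laur (RatFunc ℂ) n)) with hU
  have hzero : ∀ v ∈ V, v ∈ (spS (AdS n d) : Submodule (RatFunc ℂ) (Laur (RatFunc ℂ) n)) → v = 0 := by
    intro v h1 h2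
    have : v ∈ V ⊓ (spS (AdS n d) : Submodule (RatFunc ℂ) (Laur (RatFunc ℂ) n)) := ⟨h1, h2⟩
    rwa [hdmin, Submodule.mem_bot] at this
  have hfd : FiniteDimensional (RatFunc ℂ) (spS (AdS n (d + 1)) : Submodule (RatFunc ℂ) (Laur (RatFunc ℂ) n)) :=
    spS_finite (AdS_finite _)
  have hfU : FiniteDimensional (RatFunc ℂ) U := Submodule.finiteDimensional_of_le (inf_le_right)
  have hTU : ∀ k, k + 1 < n → T k ∈ presS U := fun k hk p hp =>
    ⟨hVT k hk p hp.1, hTA _ k hk p hp.2⟩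
  have hTiG : ∀ k, k + 1 < n → Gd t U (Ti k) := by
    intro k hk
    refine Gd.quad ht ht2 (hTiN _ k (hTU k hk)) ?_
    exact quad_aux t ht (T k) (Ti k) (hTi k) (hTinv k hk).2
  have hYU : ∀ x ∈ U, Y' (n - 1) x ∈ U := fun x hx =>
    ⟨(hVX _ hnn x hx.1).2.1, (hYI _ _ hnn x).2 hx.2⟩
  have hYY : ∀ x ∈ U, Y' (n - 1) (Y' (n - 1) x) = x := by
    intro x hx
    have hD0 : D' (n - 1) x = 0 := by
      apply hzero _ (hVX _ hnn x hx.1).2.2.2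
      rw [hDlast]
      apply Submodule.smul_mem
      refine Xinv_mem_AdS _ ?_ (hDl x (hV hx.1))
      exact Submodule.sub_mem _ (hYU x hx).2 (hYiA _ _ hnn x hx.2)
    rw [hDlast, smul_eq_zero] at hD0
    have h1 := hD0.resolve_left (inv_ne_zero hqq)
    have h2 := congrArg (fun z => Xel (⟨n - 1, hnn⟩ : Fin n) * z) h1
    simp only [mul_zero] at h2
    rw [← mul_assoc, mul_comm (Xel _) (XinvEl _), Xinv_mul_Xel, one_mul, sub_eq_zero] at h2
    rw [h2, ← Module.End.mul_apply, (hY'inv _ hnn).1, Module.End.one_apply]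
  have hYG : Gd t U (Y' (n - 1)) := by
    refine ⟨hYU, 0, ?_⟩
    have : (Y' (n - 1)).restrict hYU * (Y' (n - 1)).restrict hYU = 1 := by
      refine LinearMap.ext fun x => Subtype.ext ?_
      exact hYY x.1 x.2
    rw [pow_two, ← map_mul, this, map_one, zpow_zero]
  have hMG : Gd t U (aF Ti 0 (n - 1)) :=
    aF_mem (gdS t ht U) fun k _ h2 => hTiG k (by omega)
  have hpG : Gd t U piInv := by
    refine Gd.of_mul (g := aF Ti 0 (n - 1)) ht ?_ hMG
    have e : piInv * aF Ti 0 (n - 1) = (t ^ (n - 1))⁻¹ • Y' (n - 1) := by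
      rw [hYlast, smul_smul, inv_mul_cancel₀ (pow_ne_zero _ ht), one_smul]
    rw [e]
    refine hYG.smul ht (SgnPow.inv (SgnPow.pow ⟨2, by norm_cast⟩ _))
  obtain ⟨hpn, z, hz⟩ := hpG.pow ht n
  have hres : (piInv ^ n).restrict hpn = (q ^ d) • (1 : Module.End (RatFunc ℂ) U) := by
    refine LinearMap.ext fun x => Subtype.ext ?_
    change (piInv ^ n) x.1 = q ^ d • x.1
    rw [← sub_eq_zero]
    apply hzero
    · exact V.sub_mem (hpn x.1 x.2).1 (V.smul_mem _ x.2.1)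
    · exact pi_pow_sub hpiInv hq d _ x.2.2
  rw [hres, LinearMap.det_smul, map_one, mul_one, ← pow_mul, ← pow_mul] at hz
  have hroot := ratfunc_pow hz
  have hN : Module.finrank (RatFunc ℂ) U ≠ 0 := by
    rw [Ne, Submodule.finrank_eq_zero]; exact hdU
  have hd0 : d = 0 := by
    by_contra hd
    exact hq₀root _ (mul_ne_zero hd (mul_ne_zero hN two_ne_zero)) hroot
  -- `V` contains `1`
  have h1V : (1 : Laur (RatFunc ℂ) n) ∈ V := by
    obtain ⟨v, hv, hv0⟩ := Submodule.exists_mem_ne_zero_of_ne_bot hdU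
    have hv2 := hv.2
    rw [hd0, spS_eq_span] at hv2
    have hsub : AdS n (0 + 1) ⊆ {0} := by
      intro a ha
      have h2 := ha.2
      have h3 : ∑ i, a i = 0 := by
        have := Finset.sum_nonneg (s := Finset.univ) (fun i _ => ha.1 i)
        push_cast at h2
        omega
      ext i
      simpa using (Finset.sum_eq_zero_iff_of_nonneg (fun i _ => ha.1 i)).1 h3 i
    have h4 := Submodule.span_mono (R := RatFunc ℂ) (Set.image_mono hsub) hv2
    rw [Set.image_singleton, Submodule.mem_span_singleton, mono_zero_one] at h4
    obtain ⟨c, rfl⟩ := h4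
    have hc : c ≠ 0 := by
      rintro rfl
      simp at hv0
    exact (Submodule.smul_mem_iff _ hc).1 hv.1
  refine le_antisymm hV ?_
  rw [spS_eq_span, Submodule.span_le]
  rintro _ ⟨a, ha, rfl⟩
  revert a
  apply mono_ind
  · exact h1V
  · intro j a _ ih
    have := (hVX j.1 j.2 _ ih).1
    rw [XOp, dif_pos j.2] at this
    have h2 : Xel j * mono a 1 ∈ V := this
    rwa [Xel_mul_mono] at h2
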